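/- arXiv:2203.12345 — 2 statements merged into one kernel-verified Lean document; each statement's English description precedes it below -/
import Mathlib

section
/- Let x : [0,H]² → ℝ³ be a three times continuously differentiable surface patch whose first partial derivatives at the origin are antiparallel (ξ_{1,0} = λt, ξ_{0,1} = −μt for a unit vector t and λ, μ > 0). If the vectors r, s, t are linearly dependent and ⟨t × r, t × s⟩ < 0, then with n := (t × r)/‖t × r‖ the unit normal ν satisfies ν(u,0) → n as u → 0⁺ and ν(0,v) → −n as v → 0⁺; in particular ν has no limit at (0,0) and x is not normal continuous there. -/
/-!
Along either edge of the parameter square through the origin, the vector `x_u × x_v` vanishes at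
the origin because the first partials are parallel there, and by the product rule (with equality of
mixed partials) its derivative is `t × r` on the `u`-axis and `t × s` on the `v`-axis. A curve
leaving `0` with nonzero velocity `w` has limiting direction `w / ‖w‖`
(`tendsto_direction_of_hasDerivAt`), which gives the two one-sided limits of the normal. Linear
dependence of `r, s, t` makes `t × r` and `t × s` parallel, and the negative inner product makes
them point in opposite directions, so the two limits are the distinct vectors `n` and `-n`.
-/

open scoped RealInnerProductSpace

noncomputable section

/-- ℝ³ with the Euclidean inner product and norm. -/
abbrev E3 : Type := EuclideanSpace ℝ (Fin 3)

/-- The cross product on Euclidean ℝ³. -/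
def cross3 (a b : E3) : E3 :=
  (WithLp.equiv 2 (Fin 3 → ℝ)).symm
    (crossProduct ((WithLp.equiv 2 (Fin 3 → ℝ)) a) ((WithLp.equiv 2 (Fin 3 → ℝ)) b))

/-- Partial derivative with respect to the first variable. -/
def pd1 (x : ℝ × ℝ → E3) (p : ℝ × ℝ) : E3 := fderiv ℝ x p (1, 0)

/-- Partial derivative with respect to the second variable. -/
def pd2 (x : ℝ × ℝ → E3) (p : ℝ × ℝ) : E3 := fderiv ℝ x p (0, 1)

/-- The unit normal of a surface patch, `ν = (x_u × x_v)/‖x_u × x_v‖`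
(junk value `0` where the cross product vanishes). -/
def unitNormal (x : ℝ × ℝ → E3) (p : ℝ × ℝ) : E3 :=
  ‖cross3 (pd1 x p) (pd2 x p)‖⁻¹ • cross3 (pd1 x p) (pd2 x p)

/-- The cross product on `E3` as a continuous bilinear map, used for its product rule. -/
def crossL : E3 →L[ℝ] E3 →L[ℝ] E3 :=
  ((LinearMap.toContinuousLinearMap : (E3 →ₗ[ℝ] E3) ≃ₗ[ℝ] (E3 →L[ℝ] E3)).toLinearMap ∘ₗ
    LinearMap.mk₂ ℝ cross3
      (fun a b c => by simp [cross3]) (fun k a b => by simp [cross3])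
      (fun a b c => by simp [cross3]) (fun k a b => by simp [cross3])).toContinuousLinearMap

lemma crossL_apply (a b : E3) : crossL a b = cross3 a b := rfl

lemma crossL_self (a : E3) : crossL a a = 0 := by
  simp [crossL_apply, cross3]

lemma crossL_anticomm (a b : E3) : crossL a b = -crossL b a := by
  simp only [crossL_apply, cross3]
  rw [← cross_anticomm]
  rfl

/-- A curve leaving the origin with nonzero velocity `w` has limiting direction `w / ‖w‖`. -/
lemma tendsto_direction_of_hasDerivAt {f : ℝ → E3} {w : E3} (h0 : f 0 = 0)
    (hf : HasDerivAt f w 0) (hw : w ≠ 0) :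
    Filter.Tendsto (fun u => ‖f u‖⁻¹ • f u) (nhdsWithin 0 (Set.Ioi 0)) (nhds (‖w‖⁻¹ • w)) := by
  have h1 : Filter.Tendsto (fun u : ℝ => u⁻¹ • f u) (nhdsWithin 0 (Set.Ioi 0)) (nhds w) := by
    simpa [h0] using hf.tendsto_slope_zero_right
  have h2 := (h1.norm.inv₀ (norm_ne_zero_iff.mpr hw)).smul h1
  refine h2.congr' ?_
  filter_upwards [self_mem_nhdsWithin] with u hu
  have hu : 0 < u := hu
  rw [norm_smul, smul_smul, norm_inv, Real.norm_of_nonneg hu.le, mul_inv, inv_inv]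
  congr 1
  field_simp

/-- The derivative of a `C¹` map along a line through the origin. -/
lemma hasDerivAt_line {g : ℝ × ℝ → E3} (hg : ContDiff ℝ 1 g) (d : ℝ × ℝ) :
    HasDerivAt (fun u : ℝ => g (u • d)) (fderiv ℝ g (0, 0) d) 0 := by
  have h1 : HasDerivAt (fun u : ℝ => u • d) d 0 := by
    simpa using (hasDerivAt_id (0 : ℝ)).smul_const d
  have h2 : HasFDerivAt g (fderiv ℝ g (0, 0)) ((0 : ℝ) • d) := by
    rw [zero_smul]
    exact (hg.differentiable one_ne_zero (0, 0)).hasFDerivAt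
  exact h2.comp_hasDerivAt 0 h1

lemma contDiff_fderiv_apply {x : ℝ × ℝ → E3} (hx : ContDiff ℝ 3 x) (d : ℝ × ℝ) :
    ContDiff ℝ 1 (fun p => fderiv ℝ x p d) :=
  (hx.fderiv_right (m := 1) (by norm_num)).clm_apply contDiff_const

/-- Equality of mixed partial derivatives at the origin. -/
lemma pd1_pd2_comm {x : ℝ × ℝ → E3} (hx : ContDiff ℝ 3 x) :
    pd1 (pd2 x) (0, 0) = pd2 (pd1 x) (0, 0) := by
  have hd : DifferentiableAt ℝ (fderiv ℝ x) (0, 0) :=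
    (hx.fderiv_right (m := 1) (by norm_num)).differentiable one_ne_zero _
  have key : ∀ d e : ℝ × ℝ, fderiv ℝ (fun p => fderiv ℝ x p d) (0, 0) e
      = fderiv ℝ (fderiv ℝ x) (0, 0) e d := by
    intro d e
    rw [fderiv_clm_apply hd (differentiableAt_const d)]
    simp
  have hsym : IsSymmSndFDerivAt ℝ x (0, 0) :=
    hx.contDiffAt.isSymmSndFDerivAt (by simp; norm_num)
  exact (key _ _).trans ((hsym _ _).trans (key _ _).symm)

/-- Limit of the unit normal along the ray in direction `d` from the origin, when the first
partials there are parallel to `t`: by the product rule `x_u × x_v` has velocity `t × w` along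
this ray, and `w` is `r` for `d = (1, 0)` and `s` for `d = (0, 1)`. -/
lemma tendsto_unitNormal_line {x : ℝ × ℝ → E3} (hx : ContDiff ℝ 3 x) {t : E3} {lam mu : ℝ}
    (hxi10 : pd1 x (0, 0) = lam • t) (hxi01 : pd2 x (0, 0) = -(mu • t)) (d : ℝ × ℝ) {w : E3}
    (hw : w = mu • fderiv ℝ (pd1 x) (0, 0) d + lam • fderiv ℝ (pd2 x) (0, 0) d)
    (hne : cross3 t w ≠ 0) :
    Filter.Tendsto (fun u : ℝ => unitNormal x (u • d)) (nhdsWithin 0 (Set.Ioi 0))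
      (nhds (‖cross3 t w‖⁻¹ • cross3 t w)) := by
  have h1 := hasDerivAt_line (contDiff_fderiv_apply hx (1, 0)) d
  have h2 := hasDerivAt_line (contDiff_fderiv_apply hx (0, 1)) d
  have h := crossL.hasDerivAt_of_bilinear (fun _ => h1) (fun _ => h2)
  have e1 : fderiv ℝ x (0, 0) (1, 0) = lam • t := hxi10
  have e2 : fderiv ℝ x (0, 0) (0, 1) = -(mu • t) := hxi01
  refine tendsto_direction_of_hasDerivAt (f := fun u : ℝ => cross3 (pd1 x (u • d)) (pd2 x (u • d)))
    ?_ ?_ hne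
  · simp only [zero_smul, ← Prod.mk_zero_zero, hxi10, hxi01, ← crossL_apply]
    simp [crossL_self]
  · refine HasDerivAt.congr_deriv h ?_
    rw [zero_smul, ← Prod.mk_zero_zero, e1, e2, ← crossL_apply, hw]
    change crossL (lam • t) (fderiv ℝ (pd2 x) (0, 0) d)
      + crossL (fderiv ℝ (pd1 x) (0, 0) d) (-(mu • t)) = _
    rw [crossL_anticomm (fderiv ℝ (pd1 x) (0, 0) d)]
    simp [add_comm]

/-- If `r, s, t` are linearly dependent and `L` is linear with `L t = 0`, `t ≠ 0`, then `L r` and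
`L s` are linearly dependent; a negative inner product makes their directions opposite. -/
lemma direction_neg_of_dependent {r s t : E3} (L : E3 →L[ℝ] E3) (ht : t ≠ 0) (hLt : L t = 0)
    (hcop : ¬ LinearIndependent ℝ ![r, s, t]) (hneg : ⟪L r, L s⟫ < 0) :
    ‖L s‖⁻¹ • L s = -(‖L r‖⁻¹ • L r) := by
  have hr : L r ≠ 0 := by rintro h; simp [h] at hneg
  obtain ⟨g, hg, i, hi⟩ := Fintype.not_linearIndependent_iff.mp hcop
  simp only [Fin.sum_univ_three, Matrix.cons_val_zero, Matrix.cons_val_one, Matrix.cons_val] at hg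
  have hL : g 0 • L r + g 1 • L s = 0 := by
    simpa [hLt] using congrArg L hg
  have hb : g 1 ≠ 0 := by
    intro hb
    have ha : g 0 = 0 := by simpa [hb, hr] using hL
    have hc : g 2 = 0 := by simpa [ha, hb, ht] using hg
    fin_cases i <;> simp_all
  obtain ⟨k, hk⟩ : ∃ k : ℝ, L s = k • L r := by
    refine ⟨-(g 0 / g 1), ?_⟩
    have : g 1 • L s = -(g 0 • L r) := by rw [eq_neg_iff_add_eq_zero, add_comm]; exact hL
    rw [← inv_smul_smul₀ hb (L s), this, smul_neg, smul_smul, neg_smul, div_eq_inv_mul]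
  have hk0 : k < 0 := by
    rw [hk, inner_smul_right, real_inner_self_eq_norm_sq] at hneg
    nlinarith [sq_nonneg ‖L r‖]
  rw [hk, norm_smul, Real.norm_of_nonpos hk0.le, smul_smul, ← neg_smul]
  congr 1
  have : ‖L r‖ ≠ 0 := norm_ne_zero_iff.mpr hr
  have := hk0.ne
  field_simp

/-- **Normal discontinuity, wrong-sign case.**
If the first partial derivatives of `x` at the origin are antiparallel, the
vectors `r, s, t` are linearly dependent, and `⟨t × r, t × s⟩ < 0`, then with
`n := (t × r)/‖t × r‖` the unit normal satisfies `ν(u,0) → n` as `u → 0⁺` and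
`ν(0,v) → −n` as `v → 0⁺`; consequently `ν` has no limit at `(0,0)`, i.e. `x`
is not normal continuous there. -/
theorem antiparallel_negative_normal_discontinuity
    (H : ℝ) (hH : 0 < H) (x : ℝ × ℝ → E3) (hx : ContDiff ℝ 3 x)
    (t : E3) (ht : ‖t‖ = 1) (lam mu : ℝ) (hlam : 0 < lam) (hmu : 0 < mu)
    (hxi10 : pd1 x (0, 0) = lam • t)
    (hxi01 : pd2 x (0, 0) = -(mu • t))
    (r s : E3)
    (hr : r = mu • pd1 (pd1 x) (0, 0) + lam • pd2 (pd1 x) (0, 0))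
    (hs : s = lam • pd2 (pd2 x) (0, 0) + mu • pd2 (pd1 x) (0, 0))
    (hcop : ¬ LinearIndependent ℝ ![r, s, t])
    (hneg : ⟪cross3 t r, cross3 t s⟫ < 0)
    (n : E3) (hn : n = ‖cross3 t r‖⁻¹ • cross3 t r) :
    Filter.Tendsto (fun u : ℝ => unitNormal x (u, 0)) (nhdsWithin 0 (Set.Ioi 0)) (nhds n) ∧
    Filter.Tendsto (fun v : ℝ => unitNormal x (0, v)) (nhdsWithin 0 (Set.Ioi 0)) (nhds (-n)) ∧
    ¬ ∃ L : E3, Filter.Tendsto (unitNormal x)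
        (nhdsWithin (0, 0) ((Set.Icc (0 : ℝ) H ×ˢ Set.Icc (0 : ℝ) H) \ {(0, 0)}))
        (nhds L) := by
  have hA : cross3 t r ≠ 0 := by rintro h; simp [h] at hneg
  have hB : cross3 t s ≠ 0 := by rintro h; simp [h] at hneg
  have ht0 : t ≠ 0 := by rintro rfl; simp at ht
  have hU : Filter.Tendsto (fun u : ℝ => unitNormal x (u, 0)) (nhdsWithin 0 (Set.Ioi 0))
      (nhds n) := by
    rw [hn]
    have h := tendsto_unitNormal_line hx hxi10 hxi01 (1, 0) (w := r)
      (by rw [hr, ← pd1_pd2_comm hx]; rfl) hA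
    simpa using h
  have hV : Filter.Tendsto (fun v : ℝ => unitNormal x (0, v)) (nhdsWithin 0 (Set.Ioi 0))
      (nhds (-n)) := by
    have h := tendsto_unitNormal_line hx hxi10 hxi01 (0, 1) (w := s)
      (by rw [hs, add_comm]; rfl) hB
    have hdir : ‖cross3 t s‖⁻¹ • cross3 t s = -n := by
      rw [hn]
      exact direction_neg_of_dependent (crossL t) ht0 (crossL_self t) hcop hneg
    rw [hdir] at h
    simpa using h
  refine ⟨hU, hV, ?_⟩
  rintro ⟨L, hL⟩
  have hsmall : ∀ᶠ u : ℝ in nhdsWithin 0 (Set.Ioi 0), u ∈ Set.Ioo 0 H := Ioo_mem_nhdsGT hH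
  have cU : Filter.Tendsto (fun u : ℝ => (u, (0 : ℝ))) (nhdsWithin 0 (Set.Ioi 0))
      (nhdsWithin (0, 0) ((Set.Icc (0 : ℝ) H ×ˢ Set.Icc (0 : ℝ) H) \ {(0, 0)})) := by
    refine tendsto_nhdsWithin_iff.mpr ⟨?_, ?_⟩
    · exact ((by fun_prop : Continuous fun u : ℝ => (u, (0 : ℝ))).tendsto 0).mono_left
        nhdsWithin_le_nhds
    · filter_upwards [hsmall] with u hu
      simp [hu.1, hu.1.le, hu.2.le, hH.le]
  have cV : Filter.Tendsto (fun v : ℝ => ((0 : ℝ), v)) (nhdsWithin 0 (Set.Ioi 0))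
      (nhdsWithin (0, 0) ((Set.Icc (0 : ℝ) H ×ˢ Set.Icc (0 : ℝ) H) \ {(0, 0)})) := by
    refine tendsto_nhdsWithin_iff.mpr ⟨?_, ?_⟩
    · exact ((by fun_prop : Continuous fun v : ℝ => ((0 : ℝ), v)).tendsto 0).mono_left
        nhdsWithin_le_nhds
    · filter_upwards [hsmall] with v hv
      simp [hv.1, hv.1.le, hv.2.le, hH.le]
  have h1 : L = n := tendsto_nhds_unique (hL.comp cU) hU
  have h2 : L = -n := tendsto_nhds_unique (hL.comp cV) hV
  have h3 : (2 : ℝ) • n = 0 := by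
    rw [two_smul, ← eq_neg_iff_add_eq_zero]
    exact h1.symm.trans h2
  have hn0 : n = 0 := by simpa using h3
  rw [hn] at hn0
  simp [hA] at hn0
end
end

section
/- Let x be a surface patch with a rounded corner at (0,0), with limit normal n and limit tangent space T = span{t, n × t}. Then there exist H' ∈ (0,H], an open neighborhood V of the origin in the plane T, and a continuously differentiable function g : V → ℝ such that the translated trace {x(u,v) − x(0,0) : (u,v) ∈ [0,H']²} equals the graph {p + g(p)·n : p ∈ Π([0,H']²)} over its projection Π([0,H']²) ⊆ V, where Π(η) = (Id − n nᵀ)(x(η) − x(0,0)). In particular, x possesses a regular C¹ parametrization in a neighborhood of the rounded corner. -/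
/-!
Write `a`, `b`, `z` for the components of `x - x(0,0)` along the orthonormal frame `t`, `c = n × t`,
`n`. The differential of `a` at the corner is `λ du - μ dv`, while `b` and `z` have vanishing
differential there. Coplanarity says that `(μ, λ)` lies in the kernel of the Hessian of `z`, so this
Hessian is a multiple of `da ⊗ da`, and for a suitable `κ` the function `w = z - κ a²` has vanishing
`2`-jet. It remains to show that `w` is a `C¹` function `h` of the planar map `F = (a, b)`; then
`g(α, β) = h(α, β) + κ α²`, which is defined on the whole plane.

Onesidedness makes the derivative of `b` in the direction `(μ, λ)` at least a multiple of
`s = u + v`, on a sector slightly wider than the quadrant. Since this direction spans the kernel of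
`da` at the corner, `da` and `db` are jointly bounded below by `c s`, even when they are evaluated
at different points (`exists_transversality`). By the mean value theorem `F` is injective on the
sector, and its inverse has differential `O(1/s)`. Since `w = o(s²)` and `dw = o(s)`, the pushed
forward function `w ∘ F⁻¹` and its differential tend to zero at the corner.

To have a function that is `C¹` on an open set, although the image of the quadrant has a boundary,
`w` is first multiplied by a cutoff that is homogeneous of degree zero near the corner and supported
inside the wider sector (`exists_cutoff`); as `dχ = O(1/s)`, this keeps the differential `o(s)`.
The push-forward is then extended by zero (`exists_pushforward`): it is `C¹` off the origin by the
inverse function theorem, and at the origin since its value and differential tend to zero there.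
-/

open scoped RealInnerProductSpace

noncomputable section

/-! ### Push-forward through a degenerate point -/

/-- Mean value theorem along a segment; the intermediate point is interior to the segment, and
differentiability is not needed at the end points. -/
lemma exists_fderiv_eq_sub {E : Type*} [NormedAddCommGroup E] [NormedSpace ℝ E]
    {f : E → ℝ} (hf : Continuous f) (x y : E)
    (hd : ∀ τ ∈ Set.Ioo (0 : ℝ) 1, DifferentiableAt ℝ f (x + τ • (y - x))) :
    ∃ τ ∈ Set.Ioo (0 : ℝ) 1, f y - f x = fderiv ℝ f (x + τ • (y - x)) (y - x) := by
  obtain ⟨τ, hτ, h⟩ := exists_hasDerivAt_eq_slope (fun τ : ℝ => f (x + τ • (y - x)))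
    (fun τ => fderiv ℝ f (x + τ • (y - x)) (y - x)) zero_lt_one
    (by fun_prop) (fun τ hτ => by
      have h1 : HasDerivAt (fun τ : ℝ => x + τ • (y - x)) (y - x) τ := by
        simpa using ((hasDerivAt_id τ).smul_const (y - x)).const_add x
      exact (hd τ hτ).hasFDerivAt.comp_hasDerivAt τ h1)
  refine ⟨τ, hτ, ?_⟩
  rw [h]
  simp

/-- A function that is `C¹` away from the origin, and whose value and differential tend to zero at
the origin, is `C¹`. -/
lemma contDiff_one_of_punctured {E : Type*} [NormedAddCommGroup E] [NormedSpace ℝ E]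
    {h : E → ℝ} (h0 : h 0 = 0) (hC : ∀ p, p ≠ 0 → ContDiffAt ℝ 1 h p)
    (hlim : ∀ ε : ℝ, 0 < ε → ∃ δ : ℝ, 0 < δ ∧ ∀ p, p ≠ 0 → ‖p‖ < δ →
      |h p| ≤ ε ∧ ‖fderiv ℝ h p‖ ≤ ε) :
    ContDiff ℝ 1 h := by
  have hcont : Continuous h := by
    rw [continuous_iff_continuousAt]
    intro p
    by_cases hp : p = 0
    · subst hp
      rw [Metric.continuousAt_iff]
      intro ε hε
      obtain ⟨δ, hδ, H⟩ := hlim (ε / 2) (by positivity)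
      refine ⟨δ, hδ, fun {q} hq => ?_⟩
      by_cases hq0 : q = 0
      · simpa [hq0] using hε
      · have := (H q hq0 (by simpa using hq)).1
        rw [h0, dist_zero_right, Real.norm_eq_abs]
        linarith
    · exact (hC p hp).continuousAt
  have hd0 : HasFDerivAt h (0 : E →L[ℝ] ℝ) 0 := by
    rw [hasFDerivAt_iff_isLittleO, Asymptotics.isLittleO_iff]
    intro ε hε
    obtain ⟨δ, hδ, H⟩ := hlim ε hε
    filter_upwards [Metric.ball_mem_nhds (0 : E) hδ] with q hq
    by_cases hq0 : q = 0
    · simp [hq0, h0]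
    have hqn : ‖q‖ < δ := by simpa using hq
    have hne : ∀ τ ∈ Set.Ioo (0 : ℝ) 1, (0 : E) + τ • (q - 0) ≠ 0 := fun τ hτ => by
      simpa using ⟨hτ.1.ne', hq0⟩
    obtain ⟨τ, hτ, e⟩ := exists_fderiv_eq_sub hcont 0 q
      (fun τ hτ => (hC _ (hne τ hτ)).differentiableAt one_ne_zero)
    have hsmall : ‖(0 : E) + τ • (q - 0)‖ < δ := by
      rw [zero_add, sub_zero, norm_smul, Real.norm_eq_abs, abs_of_pos hτ.1]
      nlinarith [hτ.2, norm_nonneg q]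
    rw [e]
    simp only [zero_apply, sub_zero]
    simp only [sub_zero] at hsmall hne
    exact ContinuousLinearMap.le_of_opNorm_le _ (H _ (hne τ hτ) hsmall).2 _
  rw [contDiff_one_iff_fderiv]
  refine ⟨fun p => ?_, continuous_iff_continuousAt.2 fun p => ?_⟩
  · by_cases hp : p = 0
    · subst hp; exact hd0.differentiableAt
    · exact (hC p hp).differentiableAt one_ne_zero
  · by_cases hp : p = 0
    · subst hp
      rw [Metric.continuousAt_iff]
      intro ε hε
      obtain ⟨δ, hδ, H⟩ := hlim (ε / 2) (by positivity)
      refine ⟨δ, hδ, fun {q} hq => ?_⟩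
      rw [hd0.fderiv, dist_zero_right]
      by_cases hq0 : q = 0
      · simpa [hq0, hd0.fderiv] using hε
      · have := (H q hq0 (by simpa using hq)).2
        linarith
    · exact ((hC p hp).fderiv_right (m := 0) (by norm_num)).continuousAt

/-- **Pushing a function forward through a map that degenerates at the origin.**
On the open set `O` (a punctured sector) the map `F` is injective and its differential is bounded
below by `c * σ`. If the function `Z` is supported in a compact set `S ⊆ O ∪ {0}`, is small at the
origin and has differential `o(σ)` there, then `Z ∘ F⁻¹`, extended by zero, is `C¹`. -/
lemma exists_pushforward {E : Type*} [NormedAddCommGroup E] [NormedSpace ℝ E]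
    [FiniteDimensional ℝ E] {F : E → E} {O S : Set E} {Z σ : E → ℝ} {c : ℝ}
    (hF : ContDiff ℝ 1 F) (hF0 : F 0 = 0) (hO : IsOpen O)
    (hS : IsCompact S) (hSO : S ⊆ insert 0 O) (hc : 0 < c) (hσ : ∀ η ∈ O, 0 < σ η)
    (hinj : Set.InjOn F O) (hne : ∀ η ∈ O, F η ≠ 0)
    (hbelow : ∀ η ∈ O, ∀ k, c * σ η * ‖k‖ ≤ ‖fderiv ℝ F η k‖)
    (hZ : ContDiffOn ℝ 1 Z O) (hZS : ∀ η ∈ O, η ∉ S → Z η = 0)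
    (hlim : ∀ ε : ℝ, 0 < ε → ∃ δ : ℝ, 0 < δ ∧ ∀ η ∈ O, ‖η‖ < δ →
      |Z η| ≤ ε ∧ ‖fderiv ℝ Z η‖ ≤ ε * σ η) :
    ∃ h : E → ℝ, ContDiff ℝ 1 h ∧ h 0 = 0 ∧ ∀ η ∈ O, h (F η) = Z η := by
  classical
  set h : E → ℝ := fun p => if p ∈ F '' O then Z (Function.invFunOn F O p) else 0 with hh
  have hFO : ∀ η ∈ O, h (F η) = Z η := fun η hη => by
    have : F η ∈ F '' O := ⟨η, hη, rfl⟩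
    simp only [hh, if_pos this]
    rw [hinj (Function.invFunOn_mem this) hη (Function.invFunOn_eq this)]
  have h0 : h 0 = 0 := by
    simp only [hh]
    rw [if_neg]
    rintro ⟨η, hη, e⟩
    exact hne η hη e
  -- off the support, `h` vanishes locally
  have hoff : ∀ p, p ∉ F '' S → h =ᶠ[nhds p] fun _ => 0 := fun p hp => by
    have hcl : IsClosed (F '' S) := (hS.image hF.continuous).isClosed
    filter_upwards [hcl.isOpen_compl.mem_nhds hp] with q hq
    by_cases hqO : q ∈ F '' O
    · obtain ⟨η, hη, rfl⟩ := hqO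
      rw [hFO η hη]
      exact hZS η hη fun hηS => hq ⟨η, hηS, rfl⟩
    · simp only [hh, if_neg hqO]
  -- on `F '' O`, the inverse function theorem applies
  have hon : ∀ η ∈ O, ContDiffAt ℝ 1 h (F η) ∧
      ∀ ε, 0 ≤ ε → ‖fderiv ℝ Z η‖ ≤ ε * σ η → ‖fderiv ℝ h (F η)‖ ≤ ε / c := fun η hη => by
    have hker : Function.Injective (fderiv ℝ F η).toLinearMap := by
      rw [← LinearMap.ker_eq_bot, LinearMap.ker_eq_bot']
      intro k hk
      have h1 := hbelow η hη k
      have hk' : fderiv ℝ F η k = 0 := hk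
      rw [hk', norm_zero] at h1
      have h2 : 0 < c * σ η := mul_pos hc (hσ η hη)
      exact norm_le_zero_iff.1 (by nlinarith [norm_nonneg k])
    let L : E ≃L[ℝ] E :=
      (LinearMap.linearEquivOfInjective (fderiv ℝ F η).toLinearMap hker rfl).toContinuousLinearEquiv
    have hL : (L : E →L[ℝ] E) = fderiv ℝ F η := by ext k; rfl
    have hdF : HasFDerivAt F (L : E →L[ℝ] E) η := by
      rw [hL]; exact (hF.differentiable one_ne_zero η).hasFDerivAt
    have hsF : HasStrictFDerivAt F (L : E →L[ℝ] E) η := by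
      rw [hL]; exact hF.contDiffAt.hasStrictFDerivAt one_ne_zero
    have hG : ContDiffAt ℝ 1 (hF.contDiffAt.localInverse hdF one_ne_zero) (F η) :=
      hF.contDiffAt.to_localInverse hdF one_ne_zero
    set G := hF.contDiffAt.localInverse hdF one_ne_zero with hGdef
    have hGη : G (F η) = η := hF.contDiffAt.localInverse_apply_image hdF one_ne_zero
    have hFG : ∀ᶠ q in nhds (F η), F (G q) = q := hsF.eventually_right_inverse
    have hGO : ∀ᶠ q in nhds (F η), G q ∈ O :=
      hG.continuousAt.eventually_mem (by rw [hGη]; exact hO.mem_nhds hη)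
    have heq : h =ᶠ[nhds (F η)] Z ∘ G := by
      filter_upwards [hFG, hGO] with q hq1 hq2
      rw [Function.comp_apply, ← hFO _ hq2, hq1]
    have hZη : ContDiffAt ℝ 1 Z η := hZ.contDiffAt (hO.mem_nhds hη)
    have hdG : HasFDerivAt G (L.symm : E →L[ℝ] E) (F η) := hsF.to_localInverse.hasFDerivAt
    have hdh : HasFDerivAt h ((fderiv ℝ Z η).comp (L.symm : E →L[ℝ] E)) (F η) := by
      refine HasFDerivAt.congr_of_eventuallyEq ?_ heq
      refine HasFDerivAt.comp (F η) ?_ hdG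
      rw [hGη]
      exact (hZη.differentiableAt one_ne_zero).hasFDerivAt
    refine ⟨ContDiffAt.congr_of_eventuallyEq (ContDiffAt.comp _ (by rwa [hGη]) hG) heq, ?_⟩
    intro ε hε hb
    rw [hdh.fderiv]
    refine ContinuousLinearMap.opNorm_le_bound _ (by positivity) fun k => ?_
    have h1 := hbelow η hη (L.symm k)
    have h2 : fderiv ℝ F η (L.symm k) = k := by rw [← hL]; exact L.apply_symm_apply k
    rw [h2] at h1
    have h3 : ‖fderiv ℝ Z η (L.symm k)‖ ≤ ε * σ η * ‖L.symm k‖ :=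
      ContinuousLinearMap.le_of_opNorm_le _ hb _
    calc ‖fderiv ℝ Z η (L.symm k)‖ ≤ ε / c * (c * σ η * ‖L.symm k‖) := by
          refine h3.trans (le_of_eq ?_); field_simp
      _ ≤ ε / c * ‖k‖ := by gcongr
  refine ⟨h, contDiff_one_of_punctured h0 (fun p hp => ?_) (fun ε hε => ?_), h0, hFO⟩
  · by_cases hpO : p ∈ F '' O
    · obtain ⟨η, hη, rfl⟩ := hpO
      exact (hon η hη).1
    · refine ContDiffAt.congr_of_eventuallyEq contDiffAt_const (hoff p ?_)
      rintro ⟨η, hη, rfl⟩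
      rcases hSO hη with rfl | hη'
      · exact hp hF0
      · exact hpO ⟨η, hη', rfl⟩
  · obtain ⟨δ, hδ, H⟩ := hlim (min ε (ε * c)) (by positivity)
    -- the part of `S` at distance at least `δ` from the origin has compact image missing `0`
    have hK : IsCompact (S \ Metric.ball 0 δ) := hS.diff Metric.isOpen_ball
    have hcl : IsClosed (F '' (S \ Metric.ball 0 δ)) := (hK.image hF.continuous).isClosed
    have h0K : (0 : E) ∈ (F '' (S \ Metric.ball 0 δ))ᶜ := by
      rintro ⟨η, ⟨hη, hηb⟩, e⟩
      rcases hSO hη with rfl | hη'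
      · exact hηb (Metric.mem_ball_self hδ)
      · exact hne η hη' e
    obtain ⟨ρ, hρ, hball⟩ := Metric.isOpen_iff.1 hcl.isOpen_compl 0 h0K
    refine ⟨ρ, hρ, fun p hp hpρ => ?_⟩
    by_cases hpS : p ∈ F '' S
    · obtain ⟨η, hη, rfl⟩ := hpS
      have hηδ : ‖η‖ < δ := by
        by_contra hcon
        exact hball (by simpa using hpρ) ⟨η, ⟨hη, by simpa using hcon⟩, rfl⟩
      rcases hSO hη with rfl | hη'
      · exact absurd hF0 hp
      obtain ⟨H1, H2⟩ := H η hη' hηδ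
      refine ⟨?_, ?_⟩
      · rw [hFO η hη']; exact H1.trans (min_le_left _ _)
      · have hs := hσ η hη'
        have := (hon η hη').2 (ε * c) (by positivity)
          (H2.trans (by gcongr; exact min_le_right _ _))
        rwa [mul_div_assoc, div_self hc.ne', mul_one] at this
    · have e := hoff p hpS
      refine ⟨by rw [e.self_of_nhds]; simpa using hε.le, ?_⟩
      rw [e.fderiv_eq]
      simpa using hε.le

/-! ### Transversality in a sector -/

/-- The truncated open sector `{-ε s < u, -ε s < v, 0 < s < R}`, with `s = u + v`. It contains the
part `s < R` of the closed quadrant, except for the origin. -/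
def sector (ε R : ℝ) : Set (ℝ × ℝ) :=
  {η | 0 < η.1 + η.2 ∧ η.1 + η.2 < R ∧ -(ε * (η.1 + η.2)) < η.1 ∧ -(ε * (η.1 + η.2)) < η.2}

lemma isOpen_sector (ε R : ℝ) : IsOpen (sector ε R) := by
  have h1 : IsOpen {η : ℝ × ℝ | 0 < η.1 + η.2} := isOpen_lt (by fun_prop) (by fun_prop)
  have h2 : IsOpen {η : ℝ × ℝ | η.1 + η.2 < R} := isOpen_lt (by fun_prop) (by fun_prop)
  have h3 : IsOpen {η : ℝ × ℝ | -(ε * (η.1 + η.2)) < η.1} := isOpen_lt (by fun_prop) (by fun_prop)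
  have h4 : IsOpen {η : ℝ × ℝ | -(ε * (η.1 + η.2)) < η.2} := isOpen_lt (by fun_prop) (by fun_prop)
  exact h1.inter (h2.inter (h3.inter h4))

lemma norm_le_of_mem_sector {ε R : ℝ} (hε : ε ≤ 1) {η : ℝ × ℝ} (h : η ∈ sector ε R) :
    ‖η‖ ≤ 2 * (η.1 + η.2) := by
  obtain ⟨h1, -, h3, h4⟩ := h
  rw [Prod.norm_def, Real.norm_eq_abs, Real.norm_eq_abs]
  refine max_le (abs_le.2 ⟨?_, ?_⟩) (abs_le.2 ⟨?_, ?_⟩) <;> nlinarith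

lemma zero_notMem_sector (ε R : ℝ) : (0 : ℝ × ℝ) ∉ sector ε R := fun h => by
  simpa using h.1

/-- The interior of a segment from the origin, or from a point of the sector, to a point of the
sector stays in the sector. -/
lemma sector_segment {ε R : ℝ} {x y : ℝ × ℝ} (hx : x ∈ insert 0 (sector ε R))
    (hy : y ∈ sector ε R) {τ : ℝ} (hτ : τ ∈ Set.Ioo (0 : ℝ) 1) :
    x + τ • (y - x) ∈ sector ε R := by
  obtain ⟨t0, t1⟩ := hτ
  obtain ⟨y1, y2, y3, y4⟩ := hy
  have t1' : 0 < 1 - τ := by linarith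
  rcases hx with rfl | ⟨x1, x2, x3, x4⟩ <;>
  simp only [sector, Set.mem_ofPred_eq, Prod.fst_add, Prod.snd_add, Prod.smul_fst, Prod.smul_snd,
    Prod.fst_sub, Prod.snd_sub, smul_eq_mul, Prod.fst_zero, Prod.snd_zero] <;>
  refine ⟨?_, ?_, ?_, ?_⟩ <;>
  nlinarith [mul_pos t0 y1]

/-- In a thin enough sector around the quadrant, the derivative of `b` in the direction `e` grows at
least linearly in `u + v`, as soon as its linearization `B · e` is positive on both edges of the
quadrant; the differential of `b` grows at most linearly. -/
lemma exists_sector_lower_bound {b : ℝ × ℝ → ℝ} {B : ℝ × ℝ →L[ℝ] ℝ × ℝ →L[ℝ] ℝ} {e : ℝ × ℝ}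
    (hb0 : fderiv ℝ b 0 = 0) (hB : HasFDerivAt (fderiv ℝ b) B 0)
    (h1 : 0 < B (1, 0) e) (h2 : 0 < B (0, 1) e) :
    ∃ ε R c C : ℝ, 0 < ε ∧ ε ≤ 1 ∧ 0 < R ∧ 0 < c ∧ 0 < C ∧ ∀ ξ ∈ sector ε R,
      c * (ξ.1 + ξ.2) ≤ fderiv ℝ b ξ e ∧ ‖fderiv ℝ b ξ‖ ≤ C * (ξ.1 + ξ.2) := by
  set β₁ := B (1, 0) e
  set β₂ := B (0, 1) e
  set m := min β₁ β₂ with hm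
  have hm0 : 0 < m := lt_min h1 h2
  have hm1 : m ≤ β₁ := min_le_left _ _
  have hm2 : m ≤ β₂ := min_le_right _ _
  set δ : ℝ := m / (8 * (‖e‖ + 1)) with hδ
  have hne : 0 ≤ ‖e‖ := norm_nonneg e
  have hδ0 : 0 < δ := by positivity
  have hδe : δ * ‖e‖ ≤ m / 8 := by
    rw [hδ, div_mul_eq_mul_div, div_le_div_iff₀ (by positivity) (by positivity)]
    nlinarith
  obtain ⟨ρ, hρ, H⟩ := Metric.eventually_nhds_iff.1 (hB.isLittleO.def hδ0)
  have hε1 : m / (2 * (β₁ + β₂)) ≤ 1 := by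
    rw [div_le_one (by positivity)]; linarith
  refine ⟨m / (2 * (β₁ + β₂)), ρ / 2, m / 4, 2 * (‖B‖ + δ), by positivity, hε1, by positivity,
    by positivity, by positivity, fun ξ hξ => ?_⟩
  have hn := norm_le_of_mem_sector hε1 hξ
  have hε : m / (2 * (β₁ + β₂)) * (β₁ + β₂) = m / 2 := by field_simp
  have hε0 : 0 < m / (2 * (β₁ + β₂)) := by positivity
  set ε := m / (2 * (β₁ + β₂))
  obtain ⟨s0, s1, s2, s3⟩ := hξ
  have H' : ‖fderiv ℝ b ξ - B ξ‖ ≤ δ * ‖ξ‖ := by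
    have := @H ξ (by rw [dist_zero_right]; linarith)
    simpa [hb0] using this
  have hξe : ξ = ξ.1 • ((1 : ℝ), (0 : ℝ)) + ξ.2 • ((0 : ℝ), (1 : ℝ)) := by ext <;> simp
  have hBe : B ξ e = ξ.1 * β₁ + ξ.2 * β₂ := by
    conv_lhs => rw [hξe]
    rw [map_add, map_smul, map_smul]
    simp [β₁, β₂]
  set s := ξ.1 + ξ.2 with hs
  constructor
  · have herr : |fderiv ℝ b ξ e - B ξ e| ≤ δ * ‖ξ‖ * ‖e‖ :=
      ContinuousLinearMap.le_of_opNorm_le (fderiv ℝ b ξ - B ξ) H' e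
    have herr2 : δ * ‖ξ‖ * ‖e‖ ≤ m / 4 * s := by
      calc δ * ‖ξ‖ * ‖e‖ = δ * ‖e‖ * ‖ξ‖ := by ring
        _ ≤ m / 8 * (2 * s) := by gcongr
        _ = m / 4 * s := by ring
    have hlow : m / 2 * s ≤ B ξ e := by
      have e1 : 0 ≤ (ξ.1 + ε * s) * (β₁ - m) := mul_nonneg (by linarith) (by linarith)
      have e2 : 0 ≤ (ξ.2 + ε * s) * (β₂ - m) := mul_nonneg (by linarith) (by linarith)
      have e3 : ε * s * (β₁ + β₂) = m / 2 * s := by rw [← hε]; ring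
      have e4 : 0 < ε * s * m := by positivity
      have e5 : (ξ.1 + ξ.2) * m = s * m := by rw [hs]
      rw [hBe]
      nlinarith
    have := (abs_le.1 (herr.trans herr2)).1
    linarith
  · calc ‖fderiv ℝ b ξ‖ = ‖B ξ + (fderiv ℝ b ξ - B ξ)‖ := by congr 1; abel
      _ ≤ ‖B‖ * ‖ξ‖ + δ * ‖ξ‖ := (norm_add_le _ _).trans (add_le_add (B.le_opNorm ξ) H')
      _ = (‖B‖ + δ) * ‖ξ‖ := by ring
      _ ≤ (‖B‖ + δ) * (2 * s) := by gcongr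
      _ = 2 * (‖B‖ + δ) * s := by ring

/-- Quantitative transversality of `da` and `db`, evaluated at possibly different points: the
kernel of `da` stays close to the direction `(μ, λ)`, along which `db` is of order `u + v`. -/
lemma exists_transversality {a b : ℝ × ℝ → ℝ} {B : ℝ × ℝ →L[ℝ] ℝ × ℝ →L[ℝ] ℝ} {lam mu : ℝ}
    (hlam : 0 < lam) (hmu : 0 < mu) (ha : ContDiff ℝ 1 a)
    (ha1 : fderiv ℝ a 0 (1, 0) = lam) (ha2 : fderiv ℝ a 0 (0, 1) = -mu)
    (hb0 : fderiv ℝ b 0 = 0) (hB : HasFDerivAt (fderiv ℝ b) B 0)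
    (h1 : 0 < B (1, 0) (mu, lam)) (h2 : 0 < B (0, 1) (mu, lam)) :
    ∃ ε R c : ℝ, 0 < ε ∧ ε ≤ 1 ∧ 0 < R ∧ 0 < c ∧ ∀ ξ₁ ξ₂ : ℝ × ℝ, ‖ξ₁‖ ≤ 2 * R →
      ξ₂ ∈ sector ε R → ∀ k : ℝ × ℝ,
        c * (ξ₂.1 + ξ₂.2) * ‖k‖ ≤ |fderiv ℝ a ξ₁ k| + |fderiv ℝ b ξ₂ k| := by
  obtain ⟨ε, R, c, C, hε, hε1, hR, hc, hC, H⟩ := exists_sector_lower_bound hb0 hB h1 h2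
  set M : ℝ := lam + mu with hM
  set N : ℝ := lam ^ 2 + mu ^ 2 with hN
  have hN0 : 0 < N := by positivity
  have hM0 : 0 < M := by positivity
  -- the coefficient of `|d|` in the estimate of `‖k‖` below
  set Q : ℝ := M * (C * M + c) / N with hQ
  have hQ0 : 0 < Q := by positivity
  set δ : ℝ := c / (2 * Q) with hδ
  have hδ0 : 0 < δ := by positivity
  have hcont : ContinuousAt (fderiv ℝ a) 0 := (ha.continuous_fderiv one_ne_zero).continuousAt
  obtain ⟨ρ, hρ, hA⟩ := Metric.continuousAt_iff.1 hcont δ hδ0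
  have hR' : 0 < min (min R 1) (ρ / 3) := by positivity
  set R' := min (min R 1) (ρ / 3)
  have hRR : R' ≤ R := (min_le_left _ _).trans (min_le_left _ _)
  have hR1 : R' ≤ 1 := (min_le_left _ _).trans (min_le_right _ _)
  have hRρ : R' ≤ ρ / 3 := min_le_right _ _
  refine ⟨ε, R', c / 2 / (M + Q), hε, hε1, hR', by positivity, fun ξ₁ ξ₂ hξ₁ hξ₂ k => ?_⟩
  have hs1 : ξ₂.1 + ξ₂.2 ≤ 1 := hξ₂.2.1.le.trans hR1
  obtain ⟨Hc, HC⟩ := H ξ₂ ⟨hξ₂.1, hξ₂.2.1.trans_le hRR, hξ₂.2.2⟩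
  have hs0 : 0 < ξ₂.1 + ξ₂.2 := hξ₂.1
  set s := ξ₂.1 + ξ₂.2
  set e : ℝ × ℝ := (mu, lam) with he
  set f : ℝ × ℝ := (lam, -mu) with hf
  set α : ℝ := (mu * k.1 + lam * k.2) / N with hα
  set d : ℝ := lam * k.1 - mu * k.2 with hd
  -- `e` spans the kernel of `da` at the origin, and `f` its orthogonal complement
  have hk : k = α • e + (d / N) • f := by
    ext
    · simp only [he, hf, hα, hd, hN, Prod.fst_add, Prod.smul_fst, smul_eq_mul]; field_simp; ring
    · simp only [he, hf, hα, hd, hN, Prod.snd_add, Prod.smul_snd, smul_eq_mul]; field_simp; ring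
  have hne : ‖e‖ ≤ M := by
    rw [Prod.norm_def]
    simp only [he, Real.norm_eq_abs, abs_of_pos hlam, abs_of_pos hmu]
    exact max_le (by linarith) (by linarith)
  have hnf : ‖f‖ ≤ M := by
    rw [Prod.norm_def]
    simp only [hf, Real.norm_eq_abs, abs_neg, abs_of_pos hlam, abs_of_pos hmu]
    exact max_le (by linarith) (by linarith)
  have hd0 : fderiv ℝ a 0 k = d := by
    have hke : k = k.1 • ((1 : ℝ), (0 : ℝ)) + k.2 • ((0 : ℝ), (1 : ℝ)) := by ext <;> simp
    conv_lhs => rw [hke]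
    rw [map_add, map_smul, map_smul, ha1, ha2, hd]
    simp only [smul_eq_mul]; ring
  have hdA : |d| ≤ |fderiv ℝ a ξ₁ k| + δ * ‖k‖ := by
    have h3 : ‖fderiv ℝ a ξ₁ - fderiv ℝ a 0‖ ≤ δ := by
      rw [← dist_eq_norm]
      exact (@hA ξ₁ (by rw [dist_zero_right]; linarith)).le
    have h4 : |fderiv ℝ a ξ₁ k - fderiv ℝ a 0 k| ≤ δ * ‖k‖ :=
      ContinuousLinearMap.le_of_opNorm_le (fderiv ℝ a ξ₁ - fderiv ℝ a 0) h3 k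
    rw [hd0] at h4
    have h5 := abs_sub_abs_le_abs_sub d (fderiv ℝ a ξ₁ k)
    rw [abs_sub_comm d (fderiv ℝ a ξ₁ k)] at h5
    linarith
  have hkn : ‖k‖ ≤ |α| * M + |d| / N * M := by
    calc ‖k‖ = ‖α • e + (d / N) • f‖ := by rw [← hk]
      _ ≤ ‖α • e‖ + ‖(d / N) • f‖ := norm_add_le _ _
      _ = |α| * ‖e‖ + |d| / N * ‖f‖ := by
          rw [norm_smul, norm_smul, Real.norm_eq_abs, Real.norm_eq_abs, abs_div d N,
            abs_of_pos hN0]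
      _ ≤ _ := by gcongr
  have hαs : c * s * |α| ≤ |fderiv ℝ b ξ₂ k| + |d| / N * (C * s * M) := by
    have h3 : |fderiv ℝ b ξ₂ f| ≤ C * s * M :=
      (ContinuousLinearMap.le_of_opNorm_le _ HC f).trans (by gcongr)
    have h4 : α * fderiv ℝ b ξ₂ e = fderiv ℝ b ξ₂ k - d / N * fderiv ℝ b ξ₂ f := by
      conv_rhs => rw [hk]
      rw [map_add, map_smul, map_smul, smul_eq_mul, smul_eq_mul]; ring
    have h5 : 0 < fderiv ℝ b ξ₂ e := lt_of_lt_of_le (by positivity) Hc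
    calc c * s * |α| ≤ fderiv ℝ b ξ₂ e * |α| := by gcongr
      _ = |α * fderiv ℝ b ξ₂ e| := by rw [abs_mul, abs_of_pos h5]; ring
      _ ≤ |fderiv ℝ b ξ₂ k| + |d / N * fderiv ℝ b ξ₂ f| := by rw [h4]; exact abs_sub _ _
      _ ≤ _ := by rw [abs_mul (d / N), abs_div d N, abs_of_pos hN0]; gcongr
  have hmain : c * s * ‖k‖ ≤ M * |fderiv ℝ b ξ₂ k| + Q * s * |d| := by
    calc c * s * ‖k‖ ≤ c * s * (|α| * M + |d| / N * M) := by gcongr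
      _ = M * (c * s * |α|) + c * s * M * |d| / N := by ring
      _ ≤ M * (|fderiv ℝ b ξ₂ k| + |d| / N * (C * s * M)) + c * s * M * |d| / N := by gcongr
      _ = _ := by rw [hQ]; ring
  have hQδ : Q * δ = c / 2 := by rw [hδ]; field_simp
  have hsum : c / 2 * s * ‖k‖ ≤ (M + Q) * (|fderiv ℝ a ξ₁ k| + |fderiv ℝ b ξ₂ k|) := by
    have h3 : Q * s * |d| ≤ Q * s * |fderiv ℝ a ξ₁ k| + c / 2 * s * ‖k‖ := by
      calc Q * s * |d| ≤ Q * s * (|fderiv ℝ a ξ₁ k| + δ * ‖k‖) := by gcongr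
        _ = Q * s * |fderiv ℝ a ξ₁ k| + (Q * δ) * s * ‖k‖ := by ring
        _ = _ := by rw [hQδ]
    have h4 : Q * s * |fderiv ℝ a ξ₁ k| ≤ Q * 1 * |fderiv ℝ a ξ₁ k| := by gcongr
    have h5 := abs_nonneg (fderiv ℝ a ξ₁ k)
    have h6 := abs_nonneg (fderiv ℝ b ξ₂ k)
    rw [add_mul, mul_add, mul_add]
    linarith [mul_nonneg hM0.le h5, mul_nonneg hQ0.le h6]
  have : c / 2 / (M + Q) * s * ‖k‖ = (c / 2 * s * ‖k‖) / (M + Q) := by ring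
  rw [this, div_le_iff₀ (by positivity)]
  linarith

/-! ### The cutoff and the planar factorization -/

/-- The closed half-width sector that carries the support of the cutoff. -/
def closedSector (ε R : ℝ) : Set (ℝ × ℝ) :=
  {η | 0 ≤ η.1 + η.2 ∧ η.1 + η.2 ≤ 3 * R / 4 ∧ -(ε / 2 * (η.1 + η.2)) ≤ η.1 ∧
    -(ε / 2 * (η.1 + η.2)) ≤ η.2}

lemma isCompact_closedSector {ε R : ℝ} (hε : ε ≤ 1) : IsCompact (closedSector ε R) := by
  have h1 : IsClosed {η : ℝ × ℝ | 0 ≤ η.1 + η.2} := isClosed_le (by fun_prop) (by fun_prop)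
  have h2 : IsClosed {η : ℝ × ℝ | η.1 + η.2 ≤ 3 * R / 4} :=
    isClosed_le (by fun_prop) (by fun_prop)
  have h3 : IsClosed {η : ℝ × ℝ | -(ε / 2 * (η.1 + η.2)) ≤ η.1} :=
    isClosed_le (by fun_prop) (by fun_prop)
  have h4 : IsClosed {η : ℝ × ℝ | -(ε / 2 * (η.1 + η.2)) ≤ η.2} :=
    isClosed_le (by fun_prop) (by fun_prop)
  have hcl : IsClosed (closedSector ε R) := h1.inter (h2.inter (h3.inter h4))
  refine (isCompact_closedBall (0 : ℝ × ℝ) (2 * R)).of_isClosed_subset hcl ?_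
  rintro ⟨u, v⟩ ⟨g1, g2, g3, g4⟩
  simp only at g1 g2 g3 g4
  rw [mem_closedBall_zero_iff, Prod.norm_def, Real.norm_eq_abs, Real.norm_eq_abs]
  refine max_le (abs_le.2 ⟨?_, ?_⟩) (abs_le.2 ⟨?_, ?_⟩) <;> simp only <;> nlinarith

lemma closedSector_subset {ε R : ℝ} (hε0 : 0 < ε) :
    closedSector ε R ⊆ insert 0 (sector ε R) := by
  rintro ⟨u, v⟩ ⟨g1, g2, g3, g4⟩
  simp only at g1 g2 g3 g4
  rcases g1.eq_or_lt with h | h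
  · left
    rw [← h] at g3 g4
    ext <;> simp only [Prod.fst_zero, Prod.snd_zero] <;> linarith
  · right
    have : 0 < ε * (u + v) := by positivity
    exact ⟨h, by simp only; linarith, by simp only; linarith, by simp only; linarith⟩

/-- A cutoff equal to `1` on the quadrant near the origin, supported in a slightly larger sector.
It is homogeneous of degree zero near the origin, whence the bound on its differential. -/
lemma exists_cutoff {ε R : ℝ} (hε0 : 0 < ε) (hε : ε ≤ 1) (hR : 0 < R) :
    ∃ (χ : ℝ × ℝ → ℝ) (C : ℝ), 0 ≤ C ∧ ContDiffOn ℝ 1 χ (sector ε R) ∧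
      (∀ η ∈ sector ε R, η ∉ closedSector ε R → χ η = 0) ∧ (∀ η, |χ η| ≤ 1) ∧
      (∀ η ∈ sector ε R, ‖fderiv ℝ χ η‖ ≤ C / (η.1 + η.2)) ∧
      (∀ η : ℝ × ℝ, 0 ≤ η.1 → 0 ≤ η.2 → 0 < η.1 + η.2 → η.1 + η.2 ≤ R / 2 → χ η = 1) := by
  -- `χ(u, v) = θ(u / (u + v)) * ρ(u + v)`; the quadrant is `u / (u + v) ∈ [0, 1]`
  let θ : ContDiffBump (1 / 2 : ℝ) := ⟨1 / 2, 1 / 2 + ε / 2, by norm_num, by linarith⟩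
  let ρ : ContDiffBump (0 : ℝ) := ⟨R / 2, 3 * R / 4, by positivity, by linarith⟩
  have hθ : ContDiff ℝ 1 θ := θ.contDiff (n := 1)
  have hρ : ContDiff ℝ 1 ρ := ρ.contDiff (n := 1)
  obtain ⟨K, hK⟩ := θ.hasCompactSupport.deriv.exists_bound_of_continuous
    (hθ.continuous_deriv le_rfl)
  obtain ⟨K', hK'⟩ := ρ.hasCompactSupport.deriv.exists_bound_of_continuous
    (hρ.continuous_deriv le_rfl)
  have hK0 : 0 ≤ K := (norm_nonneg _).trans (hK 0)
  have hK0' : 0 ≤ K' := (norm_nonneg _).trans (hK' 0)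
  have hθ1 : ∀ τ, |θ τ| ≤ 1 := fun τ => by rw [abs_of_nonneg θ.nonneg]; exact θ.le_one
  have hρ1 : ∀ τ, |ρ τ| ≤ 1 := fun τ => by rw [abs_of_nonneg ρ.nonneg]; exact ρ.le_one
  set σ : ℝ × ℝ →L[ℝ] ℝ := ContinuousLinearMap.fst ℝ ℝ ℝ + ContinuousLinearMap.snd ℝ ℝ ℝ with hσdef
  have hσ : ∀ η, σ η = η.1 + η.2 := fun η => rfl
  have hfn : ‖ContinuousLinearMap.fst ℝ ℝ ℝ‖ ≤ 1 := ContinuousLinearMap.norm_fst_le ..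
  have hσn : ‖σ‖ ≤ 2 := by
    have := norm_add_le (ContinuousLinearMap.fst ℝ ℝ ℝ) (ContinuousLinearMap.snd ℝ ℝ ℝ)
    have h2 : ‖ContinuousLinearMap.snd ℝ ℝ ℝ‖ ≤ 1 := ContinuousLinearMap.norm_snd_le ..
    linarith
  refine ⟨fun η => θ (η.1 * (σ η)⁻¹) * ρ (σ η), 5 * K + 2 * R * K', by positivity, ?_, ?_, ?_,
    ?_, ?_⟩
  · have hinv : ContDiffOn ℝ 1 (fun η : ℝ × ℝ => η.1 * (σ η)⁻¹) (sector ε R) :=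
      contDiffOn_fst.mul (σ.contDiff.contDiffOn.inv fun η hη => hη.1.ne')
    exact (hθ.comp_contDiffOn hinv).mul (hρ.comp σ.contDiff).contDiffOn
  · rintro ⟨u, v⟩ ⟨g1, g2, g3, g4⟩ hS
    simp only [hσ] at g1 g2 g3 g4 ⊢
    by_cases h1 : u + v ≤ 3 * R / 4
    · have hθ0 : θ (u * (u + v)⁻¹) = 0 := by
        apply θ.zero_of_le_dist
        change 1 / 2 + ε / 2 ≤ _
        rw [Real.dist_eq, ← div_eq_mul_inv]
        by_cases h2 : -(ε / 2 * (u + v)) ≤ u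
        · have h3 : ¬ -(ε / 2 * (u + v)) ≤ v := fun h3 => hS ⟨g1.le, h1, h2, h3⟩
          have : 1 + ε / 2 ≤ u / (u + v) := by rw [le_div_iff₀ g1]; linarith
          exact le_trans (by linarith) (le_abs_self _)
        · have : u / (u + v) ≤ -(ε / 2) := by rw [div_le_iff₀ g1]; linarith
          exact le_trans (by linarith) (neg_le_abs _)
      rw [hθ0, zero_mul]
    · have hρ0 : ρ (u + v) = 0 := by
        apply ρ.zero_of_le_dist
        change 3 * R / 4 ≤ _
        rw [Real.dist_eq, sub_zero]
        exact le_trans (by linarith) (le_abs_self _)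
      rw [hρ0, mul_zero]
  · intro η
    rw [abs_mul]
    exact mul_le_one₀ (hθ1 _) (abs_nonneg _) (hρ1 _)
  · intro η hη
    have hn := norm_le_of_mem_sector hε hη
    have hu : |η.1| ≤ 2 * σ η := (norm_fst_le η).trans hn
    have hs : 0 < σ η := hη.1
    have hsR : σ η ≤ R := hη.2.1.le
    have hdinv : HasFDerivAt (fun η : ℝ × ℝ => (σ η)⁻¹) (-((σ η) ^ 2)⁻¹ • σ) η :=
      (hasDerivAt_inv hs.ne').comp_hasFDerivAt η σ.hasFDerivAt
    have hdq := (ContinuousLinearMap.fst ℝ ℝ ℝ).hasFDerivAt (x := η) |>.mul hdinv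
    have hdθ := ((hθ.differentiable one_ne_zero) (η.1 * (σ η)⁻¹)).hasDerivAt.comp_hasFDerivAt η hdq
    have hdρ := ((hρ.differentiable one_ne_zero) (σ η)).hasDerivAt.comp_hasFDerivAt η
      (σ.hasFDerivAt (x := η))
    have hd := (hdθ.mul hdρ).fderiv
    have hq : ‖η.1 • (-((σ η) ^ 2)⁻¹ • σ) + (σ η)⁻¹ • ContinuousLinearMap.fst ℝ ℝ ℝ‖
        ≤ 5 / σ η := by
      refine (norm_add_le _ _).trans ?_
      rw [norm_smul, norm_smul, norm_smul, norm_neg, norm_inv, norm_inv, norm_pow,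
        Real.norm_eq_abs, Real.norm_eq_abs, abs_of_pos hs]
      calc |η.1| * (((σ η) ^ 2)⁻¹ * ‖σ‖) + (σ η)⁻¹ * ‖ContinuousLinearMap.fst ℝ ℝ ℝ‖
          ≤ (2 * σ η) * (((σ η) ^ 2)⁻¹ * 2) + (σ η)⁻¹ * 1 := by gcongr
        _ = 5 / σ η := by field_simp; norm_num
    change ‖fderiv ℝ (fun η : ℝ × ℝ => θ (η.1 * (σ η)⁻¹) * ρ (σ η)) η‖ ≤ _ / σ η
    refine (le_of_eq (congrArg norm hd)).trans ((norm_add_le _ _).trans ?_)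
    rw [norm_smul, norm_smul, norm_smul, norm_smul]
    refine (add_le_add
      (mul_le_mul (hθ1 _) (mul_le_mul (hK' _) hσn (norm_nonneg _) hK0') (by positivity) zero_le_one)
      (mul_le_mul (hρ1 _) (mul_le_mul (hK _) hq (norm_nonneg _) hK0) (by positivity)
        zero_le_one)).trans ?_
    calc 1 * (K' * 2) + 1 * (K * (5 / σ η)) = (5 * K + 2 * σ η * K') / σ η := by field_simp; ring
      _ ≤ _ := by gcongr
  · rintro ⟨u, v⟩ hu hv hs hsR
    simp only [hσ] at hu hv hs hsR ⊢
    have h1 : θ (u * (u + v)⁻¹) = 1 := by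
      apply θ.one_of_mem_closedBall
      change dist _ _ ≤ 1 / 2
      have h2 : u / (u + v) ≤ 1 := by rw [div_le_one hs]; linarith
      have h3 : 0 ≤ u / (u + v) := by positivity
      rw [Real.dist_eq, ← div_eq_mul_inv, abs_le]
      constructor <;> linarith
    have h2 : ρ (u + v) = 1 := by
      apply ρ.one_of_mem_closedBall
      change dist _ _ ≤ R / 2
      rw [Real.dist_eq, sub_zero, abs_of_pos hs]
      exact hsR
    rw [h1, h2, one_mul]

/-- Quantitative flatness: value `o(‖η‖²)` and differential `o(‖η‖)` at the origin. -/
lemma flat_bounds {w : ℝ × ℝ → ℝ} (hw : ContDiff ℝ 1 w) (hw0 : w 0 = 0)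
    (hdw0 : fderiv ℝ w 0 = 0)
    (hddw : HasFDerivAt (fderiv ℝ w) (0 : ℝ × ℝ →L[ℝ] ℝ × ℝ →L[ℝ] ℝ) 0) {κ : ℝ} (hκ : 0 < κ) :
    ∃ δ : ℝ, 0 < δ ∧ ∀ η : ℝ × ℝ, ‖η‖ < δ → |w η| ≤ κ * ‖η‖ ^ 2 ∧ ‖fderiv ℝ w η‖ ≤ κ * ‖η‖ := by
  obtain ⟨δ, hδ, H⟩ := Metric.eventually_nhds_iff.1 (hddw.isLittleO.def hκ)
  have H' : ∀ η : ℝ × ℝ, ‖η‖ < δ → ‖fderiv ℝ w η‖ ≤ κ * ‖η‖ := fun η hη => by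
    have := @H η (by rwa [dist_zero_right])
    simpa [hdw0] using this
  refine ⟨δ, hδ, fun η hη => ⟨?_, H' η hη⟩⟩
  obtain ⟨τ, hτ, e⟩ := exists_fderiv_eq_sub hw.continuous 0 η
    fun τ _ => (hw.differentiable one_ne_zero) _
  rw [zero_add, sub_zero, hw0, sub_zero] at e
  have hle : ‖τ • η‖ ≤ ‖η‖ := by
    rw [norm_smul, Real.norm_eq_abs, abs_of_pos hτ.1]
    nlinarith [hτ.2, norm_nonneg η]
  rw [e]
  calc |fderiv ℝ w (τ • η) η| ≤ κ * ‖τ • η‖ * ‖η‖ :=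
        ContinuousLinearMap.le_of_opNorm_le _ (H' _ (hle.trans_lt hη)) η
    _ ≤ κ * ‖η‖ * ‖η‖ := by gcongr
    _ = κ * ‖η‖ ^ 2 := by ring

/-- **Planar core.** If `(a, b)` folds the quadrant onto a region bounded by a curve tangent to the
axis `b = 0`, a function `w` with vanishing `2`-jet at the origin is, on a small square at the
corner, a `C¹` function of `(a, b)`. -/
lemma exists_C1_factor {a b w : ℝ × ℝ → ℝ} {B : ℝ × ℝ →L[ℝ] ℝ × ℝ →L[ℝ] ℝ} {lam mu H : ℝ}
    (hlam : 0 < lam) (hmu : 0 < mu) (hH : 0 < H) (ha : ContDiff ℝ 1 a) (ha0 : a 0 = 0)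
    (ha1 : fderiv ℝ a 0 (1, 0) = lam) (ha2 : fderiv ℝ a 0 (0, 1) = -mu)
    (hb : ContDiff ℝ 1 b) (hb0 : b 0 = 0)
    (hdb0 : fderiv ℝ b 0 = 0) (hB : HasFDerivAt (fderiv ℝ b) B 0)
    (h1 : 0 < B (1, 0) (mu, lam)) (h2 : 0 < B (0, 1) (mu, lam))
    (hw : ContDiff ℝ 1 w) (hw0 : w 0 = 0) (hdw0 : fderiv ℝ w 0 = 0)
    (hddw : HasFDerivAt (fderiv ℝ w) (0 : ℝ × ℝ →L[ℝ] ℝ × ℝ →L[ℝ] ℝ) 0) :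
    ∃ H' ∈ Set.Ioc 0 H, ∃ h : ℝ × ℝ → ℝ, ContDiff ℝ 1 h ∧
      ∀ η ∈ Set.Icc (0 : ℝ) H' ×ˢ Set.Icc (0 : ℝ) H', h (a η, b η) = w η := by
  obtain ⟨ε, R, c, hε0, hε, hR, hc, htr⟩ :=
    exists_transversality hlam hmu ha ha1 ha2 hdb0 hB h1 h2
  obtain ⟨χ, C, hC, hχ, hχS, hχ1, hdχ, hχone⟩ := exists_cutoff hε0 hε hR
  set F : ℝ × ℝ → ℝ × ℝ := fun η => (a η, b η) with hFdef
  have hF0 : F 0 = 0 := by simp [hFdef, ha0, hb0]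
  have hnorm : ∀ ξ ∈ sector ε R, ‖ξ‖ ≤ 2 * R := fun ξ hξ =>
    (norm_le_of_mem_sector hε hξ).trans (by linarith [hξ.2.1])
  -- the mean value points for `a` and for `b` differ, so the two-point form of transversality is used
  have hinj : ∀ x ∈ insert 0 (sector ε R), ∀ y ∈ sector ε R, F x = F y → x = y := by
    intro x hx y hy hxy
    obtain ⟨τ₁, hτ₁, e₁⟩ := exists_fderiv_eq_sub ha.continuous x y
      fun τ _ => (ha.differentiable one_ne_zero) _
    obtain ⟨τ₂, hτ₂, e₂⟩ := exists_fderiv_eq_sub hb.continuous x y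
      fun τ _ => (hb.differentiable one_ne_zero) _
    have hm₁ := sector_segment hx hy hτ₁
    have hm₂ := sector_segment hx hy hτ₂
    have key := htr _ _ (hnorm _ hm₁) hm₂ (y - x)
    have hxa : a x = a y := congrArg Prod.fst hxy
    have hxb : b x = b y := congrArg Prod.snd hxy
    rw [← e₁, ← e₂, hxa, hxb, sub_self, sub_self, abs_zero, add_zero] at key
    have hpos := mul_pos hc hm₂.1
    have : ‖y - x‖ ≤ 0 := by
      by_contra hcon
      have := mul_pos hpos (not_le.1 hcon)
      linarith
    exact (sub_eq_zero.1 (norm_le_zero_iff.1 this)).symm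
  obtain ⟨h, hh, hh0, hhF⟩ := exists_pushforward (F := F) (O := sector ε R)
    (S := closedSector ε R) (Z := fun η => w η * χ η) (σ := fun η => η.1 + η.2) (c := c / 2)
    (ha.prodMk hb) hF0 (isOpen_sector ε R) (isCompact_closedSector hε)
    (closedSector_subset hε0) (by positivity) (fun η hη => hη.1)
    (fun x hx y hy e => hinj x (Set.mem_insert_of_mem _ hx) y hy e)
    (fun η hη e => zero_notMem_sector ε R
      ((hinj 0 (Set.mem_insert _ _) η hη (hF0.trans e.symm)) ▸ hη))
    (fun η hη k => by
      have e : fderiv ℝ F η = (fderiv ℝ a η).prod (fderiv ℝ b η) :=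
        ((ha.differentiable one_ne_zero η).hasFDerivAt.prodMk
          (hb.differentiable one_ne_zero η).hasFDerivAt).fderiv
      have key := htr η η (hnorm η hη) hη k
      have m1 : |fderiv ℝ a η k| ≤ ‖fderiv ℝ F η k‖ := by
        rw [e]
        exact norm_fst_le (fderiv ℝ a η k, fderiv ℝ b η k)
      have m2 : |fderiv ℝ b η k| ≤ ‖fderiv ℝ F η k‖ := by
        rw [e]
        exact norm_snd_le (fderiv ℝ a η k, fderiv ℝ b η k)
      linarith)
    (hw.contDiffOn.mul hχ) (fun η hη hS => by rw [hχS η hη hS, mul_zero])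
    (fun κ hκ => by
      -- `4 * C + 2` collects the terms `w dχ` and `χ dw`, using `‖η‖ ≤ 2 (u + v)`
      obtain ⟨δ, hδ, hflat⟩ := flat_bounds hw hw0 hdw0 hddw (κ := κ / (4 * C + 2)) (by positivity)
      refine ⟨min δ 1, by positivity, fun η hη hηδ => ?_⟩
      obtain ⟨f1, f2⟩ := hflat η (hηδ.trans_le (min_le_left _ _))
      have hη1 : ‖η‖ ≤ 1 := hηδ.le.trans (min_le_right _ _)
      have hn := norm_le_of_mem_sector hε hη
      have hs : 0 < η.1 + η.2 := hη.1
      have hκ' : κ / (4 * C + 2) ≤ κ := div_le_self hκ.le (by linarith)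
      constructor
      · rw [abs_mul]
        calc |w η| * |χ η| ≤ |w η| * 1 := by gcongr; exact hχ1 η
          _ ≤ κ / (4 * C + 2) * ‖η‖ ^ 2 := by rw [mul_one]; exact f1
          _ ≤ κ * 1 ^ 2 := by gcongr
          _ = κ := by ring
      · have hdZ : fderiv ℝ (fun η => w η * χ η) η = w η • fderiv ℝ χ η + χ η • fderiv ℝ w η :=
          fderiv_fun_mul (hw.differentiable one_ne_zero η)
            ((hχ.contDiffAt ((isOpen_sector ε R).mem_nhds hη)).differentiableAt one_ne_zero)
        rw [hdZ]
        refine (norm_add_le _ _).trans ?_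
        rw [norm_smul, norm_smul, Real.norm_eq_abs, Real.norm_eq_abs]
        calc |w η| * ‖fderiv ℝ χ η‖ + |χ η| * ‖fderiv ℝ w η‖
            ≤ (κ / (4 * C + 2) * (2 * (η.1 + η.2)) ^ 2) * (C / (η.1 + η.2))
              + 1 * (κ / (4 * C + 2) * (2 * (η.1 + η.2))) := by
              gcongr
              · exact f1.trans (by gcongr)
              · exact hdχ η hη
              · exact hχ1 η
              · exact f2.trans (by gcongr)
          _ = κ * (η.1 + η.2) := by field_simp; ring)
  refine ⟨min H (R / 4), ⟨by positivity, min_le_left _ _⟩, h, hh, ?_⟩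
  rintro ⟨u, v⟩ ⟨⟨hu0, hu⟩, ⟨hv0, hv⟩⟩
  simp only at hu0 hu hv0 hv
  have hu' := hu.trans (min_le_right H (R / 4))
  have hv' := hv.trans (min_le_right H (R / 4))
  rcases (add_nonneg hu0 hv0).eq_or_lt with hs | hs
  · have hz : ((u, v) : ℝ × ℝ) = 0 := by
      ext <;> simp only [Prod.fst_zero, Prod.snd_zero] <;> linarith
    rw [hz, hw0, ha0, hb0]
    exact hh0
  · have hmem : ((u, v) : ℝ × ℝ) ∈ sector ε R := by
      have := mul_pos hε0 hs
      exact ⟨hs, by simp only; linarith, by simp only; linarith, by simp only; linarith⟩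
    have := hhF _ hmem
    rwa [hχone (u, v) hu0 hv0 hs (by simp only; linarith), mul_one] at this

/-! ### The orthonormal frame and the jets of the components -/

lemma inner_E3 (a b : E3) : ⟪a, b⟫ = a 0 * b 0 + a 1 * b 1 + a 2 * b 2 := by
  simp only [PiLp.inner_apply, Fin.sum_univ_three, RCLike.inner_apply, conj_trivial]
  ring

lemma cross3_zero (a b : E3) : cross3 a b 0 = a 1 * b 2 - a 2 * b 1 := by
  simp [cross3, cross_apply]

lemma cross3_one (a b : E3) : cross3 a b 1 = a 2 * b 0 - a 0 * b 2 := by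
  simp [cross3, cross_apply]

lemma cross3_two (a b : E3) : cross3 a b 2 = a 0 * b 1 - a 1 * b 0 := by
  simp [cross3, cross_apply]

lemma inner_cross3_left (a b v : E3) : ⟪cross3 a b, v⟫ = ⟪a, cross3 b v⟫ := by
  simp only [inner_E3, cross3_zero, cross3_one, cross3_two]; ring

lemma inner_cross3_self_left (a b : E3) : ⟪cross3 a b, a⟫ = 0 := by
  simp only [inner_E3, cross3_zero, cross3_one, cross3_two]; ring

lemma inner_cross3_self_right (a b : E3) : ⟪cross3 a b, b⟫ = 0 := by
  simp only [inner_E3, cross3_zero, cross3_one, cross3_two]; ring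

lemma inner_cross3_cross3 (a b : E3) :
    ⟪cross3 a b, cross3 a b⟫ = ⟪a, a⟫ * ⟪b, b⟫ - ⟪a, b⟫ ^ 2 := by
  simp only [inner_E3, cross3_zero, cross3_one, cross3_two]; ring

/-- Linear dependence of three vectors of `ℝ³` makes their triple product vanish. -/
lemma inner_cross3_eq_zero {r s t : E3} (h : ¬ LinearIndependent ℝ ![r, s, t]) :
    ⟪cross3 t r, s⟫ = 0 := by
  have h2 : ¬ LinearIndependent ℝ (Matrix.row !![r 0, r 1, r 2; s 0, s 1, s 2; t 0, t 1, t 2]) := by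
    intro hli
    apply h
    have e : ((WithLp.linearEquiv 2 ℝ (Fin 3 → ℝ)).toLinearMap ∘ ![r, s, t] : Fin 3 → Fin 3 → ℝ)
        = Matrix.row !![r 0, r 1, r 2; s 0, s 1, s 2; t 0, t 1, t 2] := by
      ext i j
      fin_cases i <;> fin_cases j <;> rfl
    rw [← e] at hli
    exact LinearIndependent.of_comp _ hli
  rw [Matrix.linearIndependent_rows_iff_isUnit, Matrix.isUnit_iff_isUnit_det, isUnit_iff_ne_zero,
    not_not, Matrix.det_fin_three] at h2
  simp at h2
  simp only [inner_E3, cross3_zero, cross3_one, cross3_two]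
  linarith

/-- The frame `(t, n × t, n)` is orthonormal, so every vector is the sum of its components. -/
lemma frame_expansion {t n c : E3} (ht : ⟪t, t⟫ = 1) (hn : ⟪n, n⟫ = 1) (htn : ⟪n, t⟫ = 0)
    (hc : c = cross3 n t) (v : E3) : v = ⟪t, v⟫ • t + ⟪c, v⟫ • c + ⟪n, v⟫ • n := by
  have hcc : ⟪c, c⟫ = 1 := by rw [hc, inner_cross3_cross3, ht, hn, htn]; norm_num
  have hct : ⟪c, t⟫ = 0 := by rw [hc, inner_cross3_self_right]
  have hcn : ⟪c, n⟫ = 0 := by rw [hc, inner_cross3_self_left]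
  have hon : Orthonormal ℝ ![t, c, n] := by
    rw [orthonormal_iff_ite]
    intro i j
    fin_cases i <;> fin_cases j <;>
      simp [-inner_self_eq_norm_sq_to_K, ht, hn, hcc, hct, hcn, htn, real_inner_comm c t,
        real_inner_comm c n, real_inner_comm n t]
  have hsp : ⊤ ≤ Submodule.span ℝ (Set.range ![t, c, n]) :=
    (hon.linearIndependent.span_eq_top_of_card_eq_finrank (by simp)).ge
  have := (OrthonormalBasis.mk hon hsp).sum_repr' v
  rw [Fin.sum_univ_three] at this
  simpa using this.symm

/-- The jets at the origin of a component `⟪e, x - x 0⟫` of the patch. -/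
lemma component_jets {x : ℝ × ℝ → E3} (hx : ContDiff ℝ 3 x) (e : E3) :
    ContDiff ℝ 3 (fun η => ⟪e, x η - x 0⟫) ∧
    (∀ η k, fderiv ℝ (fun η => ⟪e, x η - x 0⟫) η k = ⟪e, fderiv ℝ x η k⟫) ∧
    ∃ B : ℝ × ℝ →L[ℝ] ℝ × ℝ →L[ℝ] ℝ, HasFDerivAt (fderiv ℝ (fun η => ⟪e, x η - x 0⟫)) B 0 ∧
      ∀ k l, B k l = ⟪e, fderiv ℝ (fderiv ℝ x) 0 k l⟫ := by
  have hd : ∀ η, HasFDerivAt (fun η => ⟪e, x η - x 0⟫) ((innerSL ℝ e).comp (fderiv ℝ x η)) η :=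
    fun η => (innerSL ℝ e).hasFDerivAt.comp η
      ((hx.differentiable (by norm_num) η).hasFDerivAt.sub_const (x 0))
  have hfd : fderiv ℝ (fun η => ⟪e, x η - x 0⟫) = fun η => (innerSL ℝ e).comp (fderiv ℝ x η) :=
    funext fun η => (hd η).fderiv
  refine ⟨contDiff_const.inner ℝ (hx.sub contDiff_const), fun η k => by rw [hfd]; rfl, ?_⟩
  have hdd : HasFDerivAt (fderiv ℝ x) (fderiv ℝ (fderiv ℝ x) 0) 0 :=
    ((hx.fderiv_right (m := 2) (by norm_num)).differentiable (by norm_num) 0).hasFDerivAt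
  refine ⟨((ContinuousLinearMap.compL ℝ (ℝ × ℝ) E3 ℝ) (innerSL ℝ e)).comp
    (fderiv ℝ (fderiv ℝ x) 0), ?_, fun k l => rfl⟩
  rw [hfd]
  exact ((ContinuousLinearMap.compL ℝ (ℝ × ℝ) E3 ℝ) (innerSL ℝ e)).hasFDerivAt.comp 0 hdd

/-- A partial derivative of a partial derivative is a value of the second differential. -/
lemma fderiv_fderiv_apply {x : ℝ × ℝ → E3} (hx : ContDiff ℝ 3 x) (k l : ℝ × ℝ) :
    fderiv ℝ (fun p => fderiv ℝ x p k) 0 l = fderiv ℝ (fderiv ℝ x) 0 l k := by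
  have hdd : HasFDerivAt (fderiv ℝ x) (fderiv ℝ (fderiv ℝ x) 0) 0 :=
    ((hx.fderiv_right (m := 2) (by norm_num)).differentiable (by norm_num) 0).hasFDerivAt
  have := (hdd.clm_apply (hasFDerivAt_const k (0 : ℝ × ℝ))).fderiv
  rw [this]
  simp

/-! ### Regularity at the corner -/

/-- **C¹-regularity at a rounded corner.**
If the surface patch `x` has a rounded corner at `(0,0)` with limit normal `n`
and cross vector `c = n × t` (so that the limit tangent space is
`T = span{t, c}`, with orthonormal coordinates `p ↦ ⟨t,p⟩, ⟨c,p⟩`), then, on a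
sufficiently small square `[0,H']²`, the translated trace
`{x(u,v) − x(0,0)}` is the graph of a `C¹` function `g` in the direction `n`
over its projection to `T`: there is an open neighborhood `V` of the origin in
the coordinate plane of `T` containing the projected trace, and a function
`g : V → ℝ` of class `C¹` such that the trace equals
`{α•t + β•c + g(α,β)•n : (α,β) ∈ Π([0,H']²)}`.
In particular, `x` possesses a regular `C¹` parametrization near the corner. -/
theorem rounded_corner_C1_graph
    (H : ℝ) (hH : 0 < H) (x : ℝ × ℝ → E3) (hx : ContDiff ℝ 3 x)
    (t : E3) (ht : ‖t‖ = 1) (lam mu : ℝ) (hlam : 0 < lam) (hmu : 0 < mu)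
    (hxi10 : pd1 x (0, 0) = lam • t)
    (hxi01 : pd2 x (0, 0) = -(mu • t))
    (r s : E3)
    (hr : r = mu • pd1 (pd1 x) (0, 0) + lam • pd2 (pd1 x) (0, 0))
    (hs : s = lam • pd2 (pd2 x) (0, 0) + mu • pd2 (pd1 x) (0, 0))
    (hcop : ¬ LinearIndependent ℝ ![r, s, t])
    (hone : 0 < ⟪cross3 t r, cross3 t s⟫)
    (n : E3) (hn : n = ‖cross3 t r‖⁻¹ • cross3 t r)
    (c : E3) (hc : c = cross3 n t) :
    ∃ H' : ℝ, H' ∈ Set.Ioc 0 H ∧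
    ∃ V : Set (ℝ × ℝ), IsOpen V ∧ (0, 0) ∈ V ∧
    ∃ g : ℝ × ℝ → ℝ, ContDiffOn ℝ 1 g V ∧
      ((fun η : ℝ × ℝ => (⟪t, x η - x (0, 0)⟫, ⟪c, x η - x (0, 0)⟫)) ''
          (Set.Icc (0 : ℝ) H' ×ˢ Set.Icc (0 : ℝ) H') ⊆ V) ∧
      (fun η : ℝ × ℝ => x η - x (0, 0)) '' (Set.Icc (0 : ℝ) H' ×ˢ Set.Icc (0 : ℝ) H') =
        (fun q : ℝ × ℝ => q.1 • t + q.2 • c + g q • n) ''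
          ((fun η : ℝ × ℝ => (⟪t, x η - x (0, 0)⟫, ⟪c, x η - x (0, 0)⟫)) ''
            (Set.Icc (0 : ℝ) H' ×ˢ Set.Icc (0 : ℝ) H')) := by
  have h00 : ((0 : ℝ), (0 : ℝ)) = 0 := rfl
  have htr : 0 < ‖cross3 t r‖ := norm_pos_iff.2 fun h => by
    rw [h, inner_zero_left] at hone; exact lt_irrefl _ hone
  have htt : ⟪t, t⟫ = 1 := by rw [real_inner_self_eq_norm_sq, ht]; norm_num
  have hnn : ⟪n, n⟫ = 1 := by
    rw [hn, real_inner_smul_left, real_inner_smul_right, real_inner_self_eq_norm_sq]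
    field_simp
  have hnt : ⟪n, t⟫ = 0 := by rw [hn, real_inner_smul_left, inner_cross3_self_left, mul_zero]
  have hct : ⟪c, t⟫ = 0 := by rw [hc, inner_cross3_self_right]
  have hnr : ⟪n, r⟫ = 0 := by rw [hn, real_inner_smul_left, inner_cross3_self_right, mul_zero]
  have hns : ⟪n, s⟫ = 0 := by
    rw [hn, real_inner_smul_left, inner_cross3_eq_zero hcop, mul_zero]
  have hcr : 0 < ⟪c, r⟫ := by
    rw [hc, inner_cross3_left, hn, real_inner_smul_left, real_inner_self_eq_norm_sq]
    positivity
  have hcs : 0 < ⟪c, s⟫ := by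
    rw [hc, inner_cross3_left, hn, real_inner_smul_left]
    positivity
  -- the hypotheses in terms of the differentials of `x`
  set D := fderiv ℝ (fderiv ℝ x) 0 with hD
  have hsymm : ∀ k l, D k l = D l k := fun k l =>
    (hx.contDiffAt (x := (0 : ℝ × ℝ))).isSymmSndFDerivAt (by simp; norm_num) k l
  have hx1 : fderiv ℝ x 0 (1, 0) = lam • t := hxi10
  have hx2 : fderiv ℝ x 0 (0, 1) = -(mu • t) := hxi01
  have he : ((mu, lam) : ℝ × ℝ) = mu • ((1 : ℝ), (0 : ℝ)) + lam • ((0 : ℝ), (1 : ℝ)) := by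
    ext <;> simp
  have hrD : r = D (1, 0) (mu, lam) := by
    rw [he, map_add, map_smul, map_smul, hsymm (1, 0) (0, 1), hr]
    congr 2
    · exact fderiv_fderiv_apply hx (1, 0) (1, 0)
    · exact fderiv_fderiv_apply hx (1, 0) (0, 1)
  have hsD : s = D (0, 1) (mu, lam) := by
    rw [he, map_add, map_smul, map_smul, hs, add_comm]
    congr 2
    · exact fderiv_fderiv_apply hx (1, 0) (0, 1)
    · exact fderiv_fderiv_apply hx (0, 1) (0, 1)
  have hbasis : ∀ k : ℝ × ℝ, k = k.1 • ((1 : ℝ), (0 : ℝ)) + k.2 • ((0 : ℝ), (1 : ℝ)) := fun k => by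
    ext <;> simp
  have hDx : ∀ k, fderiv ℝ x 0 k = (lam * k.1 - mu * k.2) • t := fun k => by
    conv_lhs => rw [hbasis k]
    rw [map_add, map_smul, map_smul, hx1, hx2]
    module
  obtain ⟨ha, hda, A, hA, -⟩ := component_jets hx t
  obtain ⟨hb, hdb, B, hB, hBD⟩ := component_jets hx c
  obtain ⟨hz, hdz, Z, hZ, hZD⟩ := component_jets hx n
  set a : ℝ × ℝ → ℝ := fun η => ⟪t, x η - x 0⟫ with hadef
  set b : ℝ × ℝ → ℝ := fun η => ⟪c, x η - x 0⟫ with hbdef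
  set z : ℝ × ℝ → ℝ := fun η => ⟪n, x η - x 0⟫ with hzdef
  have ha0 : a 0 = 0 := by simp [hadef]
  have hb0 : b 0 = 0 := by simp [hbdef]
  have hz0 : z 0 = 0 := by simp [hzdef]
  have hda0 : ∀ k, fderiv ℝ a 0 k = lam * k.1 - mu * k.2 := fun k => by
    rw [hda, hDx, real_inner_smul_right, htt, mul_one]
  have hdb0 : fderiv ℝ b 0 = 0 := ContinuousLinearMap.ext fun k => by
    rw [hdb, hDx, real_inner_smul_right, hct, mul_zero]; rfl
  have hdz0 : fderiv ℝ z 0 = 0 := ContinuousLinearMap.ext fun k => by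
    rw [hdz, hDx, real_inner_smul_right, hnt, mul_zero]; rfl
  -- `(μ, λ)` is in the kernel of the Hessian of `z`, so this Hessian is a multiple of `da ⊗ da`
  set κ : ℝ := Z (1, 0) (1, 0) / (2 * lam ^ 2) with hκ
  set w : ℝ × ℝ → ℝ := fun η => z η - κ * a η ^ 2 with hwdef
  have hw : ContDiff ℝ 3 w := hz.sub (contDiff_const.mul (ha.pow 2))
  have had : Differentiable ℝ a := ha.differentiable (by norm_num)
  have hdw : fderiv ℝ w = fun η => fderiv ℝ z η - (2 * κ * a η) • fderiv ℝ a η := by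
    funext η
    have := ((hz.differentiable (by norm_num) η).hasFDerivAt.sub
      (((had η).hasFDerivAt.pow 2).const_mul κ)).fderiv
    refine Eq.trans this ?_
    ext <;> simp <;> ring
  have hZsymm : ∀ k l, Z k l = Z l k := fun k l => by rw [hZD, hZD, ← hD, hsymm]
  have hZ11 : Z (1, 0) (1, 0) = 2 * κ * lam ^ 2 := by rw [hκ]; field_simp
  have hZ1e : mu * Z (1, 0) (1, 0) + lam * Z (1, 0) (0, 1) = 0 := by
    have : Z (1, 0) (mu, lam) = 0 := by rw [hZD, ← hD, ← hrD, hnr]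
    rwa [he, map_add, map_smul, map_smul] at this
  have hZ2e : mu * Z (1, 0) (0, 1) + lam * Z (0, 1) (0, 1) = 0 := by
    have : Z (0, 1) (mu, lam) = 0 := by rw [hZD, ← hD, ← hsD, hns]
    rwa [he, map_add, map_smul, map_smul, hZsymm (0, 1) (1, 0)] at this
  have hZ12 : Z (1, 0) (0, 1) = -(2 * κ * lam * mu) := by
    apply mul_left_cancel₀ hlam.ne'
    rw [hZ11] at hZ1e
    linear_combination hZ1e
  have hZ22 : Z (0, 1) (0, 1) = 2 * κ * mu ^ 2 := by
    apply mul_left_cancel₀ hlam.ne'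
    rw [hZ12] at hZ2e
    linear_combination hZ2e
  have hddw : HasFDerivAt (fderiv ℝ w) (0 : ℝ × ℝ →L[ℝ] ℝ × ℝ →L[ℝ] ℝ) 0 := by
    rw [hdw]
    have := hZ.sub ((((had 0).hasFDerivAt).const_mul (2 * κ)).smul hA)
    refine this.congr_fderiv ?_
    ext <;> simp [ha0, hda0, hZ11, hZ12, hZ22, hZsymm (0, 1) (1, 0)] <;> ring
  obtain ⟨H', hH', h, hh, hfac⟩ := exists_C1_factor (B := B) hlam hmu hH
    (ha.of_le (by norm_num)) ha0 (by simp [hda0]) (by simp [hda0])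
    (hb.of_le (by norm_num)) hb0 hdb0 hB
    (by rw [hBD, ← hD, ← hrD]; exact hcr) (by rw [hBD, ← hD, ← hsD]; exact hcs)
    (hw.of_le (by norm_num)) (by simp [hwdef, hz0, ha0]) (by simp [hdw, hdz0, ha0]) hddw
  refine ⟨H', hH', Set.univ, isOpen_univ, Set.mem_univ _, fun q => h q + κ * q.1 ^ 2, ?_,
    Set.subset_univ _, ?_⟩
  · exact (hh.add (contDiff_const.mul (contDiff_fst.pow 2))).contDiffOn
  · rw [Set.image_image]
    refine Set.image_congr fun η hη => ?_
    have e1 : h (a η, b η) + κ * a η ^ 2 = z η := by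
      rw [hfac η hη, hwdef]; ring
    change x η - x 0 = a η • t + b η • c + (h (a η, b η) + κ * a η ^ 2) • n
    rw [e1]
    exact frame_expansion htt hnn hnt hc _
end
end
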